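/- arXiv:1807.11837 — 9 statements merged into one kernel-verified Lean document; each statement's English description precedes it below -/
import Mathlib

section
/- For all (t, s) with a+1 ≤ t ≤ b and a+2 ≤ s ≤ b, the left-focal Green's function satisfies G_l(t, s) ≥ 0. -/
/-- Rising factorial `rf x r = Γ(x+r)/Γ(x)`, with the convention `rf 0 r = 0`. -/
noncomputable def rf (x r : ℝ) : ℝ := if x = 0 then 0 else Real.Gamma (x + r) / Real.Gamma x

/-- The left-focal Green's function. -/
noncomputable def Gl (a b : ℤ) (α : ℝ) (t s : ℤ) : ℝ :=
  if t ≤ s - 1 then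
    (1 / Real.Gamma α) *
      (rf (b - s + 1 : ℝ) (α - 1) * rf (t - a : ℝ) (α - 2) / rf (b - a : ℝ) (α - 2))
  else
    (1 / Real.Gamma α) *
      (rf (b - s + 1 : ℝ) (α - 1) * rf (t - a : ℝ) (α - 2) / rf (b - a : ℝ) (α - 2) -
        rf (t - s + 1 : ℝ) (α - 1))

lemma rf_pos_aux (x r : ℝ) (hx : 0 < x) (hr : 0 < x + r) : 0 < rf x r := by
  unfold rf
  rw [if_neg hx.ne']
  exact div_pos (Real.Gamma_pos_of_pos hr) (Real.Gamma_pos_of_pos hx)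

lemma rf_succ_aux (x r : ℝ) (hx : 0 < x) (hr : 0 < x + r) :
    rf (x + 1) r = rf x r * ((x + r) / x) := by
  unfold rf
  rw [if_neg hx.ne', if_neg (by positivity), show x + 1 + r = (x + r) + 1 by ring,
    Real.Gamma_add_one hr.ne', Real.Gamma_add_one hx.ne']
  have := (Real.Gamma_pos_of_pos hx).ne'
  field_simp

lemma rf_mono_aux (x r : ℝ) (hx : 0 < x) (hr : 0 ≤ r) (n : ℕ) : rf x r ≤ rf (x + n) r := by
  induction n with
  | zero => simp
  | succ k ih =>
    refine ih.trans ?_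
    have h1 : (0 : ℝ) < x + k := by positivity
    have h2 : (0 : ℝ) < x + k + r := by positivity
    have h3 := rf_pos_aux _ _ h1 h2
    rw [Nat.cast_add, Nat.cast_one, ← add_assoc, rf_succ_aux _ _ h1 h2]
    refine le_mul_of_one_le_right h3.le ?_
    rw [one_le_div h1]
    linarith

lemma rf_anti_aux (x r : ℝ) (hx : 0 < x) (hr : r ≤ 0) (hxr : 0 < x + r) (n : ℕ) :
    rf (x + n) r ≤ rf x r := by
  induction n with
  | zero => simp
  | succ k ih =>
    refine le_trans ?_ ih
    have h0 : (0 : ℝ) ≤ k := Nat.cast_nonneg k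
    have h1 : (0 : ℝ) < x + k := by positivity
    have h2 : (0 : ℝ) < x + k + r := by linarith
    have h3 := rf_pos_aux _ _ h1 h2
    rw [Nat.cast_add, Nat.cast_one, ← add_assoc, rf_succ_aux _ _ h1 h2]
    refine mul_le_of_le_one_right h3.le ?_
    rw [div_le_one h1]
    linarith

theorem left_focal_green_nonneg (a b : ℤ) (hab : 2 ≤ b - a) (α : ℝ)
    (hα1 : 1 < α) (hα2 : α < 2) :
    ∀ t s : ℤ, a + 1 ≤ t → t ≤ b → a + 2 ≤ s → s ≤ b → 0 ≤ Gl a b α t s := by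
  intro t s h1 h2 h3 h4
  have r1 : (a : ℝ) + 1 ≤ t := by exact_mod_cast h1
  have r2 : (t : ℝ) ≤ b := by exact_mod_cast h2
  have r4 : (s : ℝ) ≤ b := by exact_mod_cast h4
  have hG : 0 < 1 / Real.Gamma α :=
    one_div_pos.mpr (Real.Gamma_pos_of_pos (by linarith))
  have p1 := rf_pos_aux (b - s + 1 : ℝ) (α - 1) (by linarith) (by linarith)
  have p2 := rf_pos_aux (t - a : ℝ) (α - 2) (by linarith) (by linarith)
  have p3 := rf_pos_aux (b - a : ℝ) (α - 2) (by linarith) (by linarith)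
  unfold Gl
  split_ifs with h
  · positivity
  · have r5 : (s : ℝ) ≤ t := by exact_mod_cast (by omega : s ≤ t)
    obtain ⟨n, hn⟩ := Int.eq_ofNat_of_zero_le (by omega : 0 ≤ b - t)
    have hn' : (b : ℝ) = t + n := by
      have : b = t + n := by omega
      exact_mod_cast this
    have m1 := rf_mono_aux (t - s + 1 : ℝ) (α - 1) (by linarith) (by linarith) n
    have m2 := rf_anti_aux (t - a : ℝ) (α - 2) (by linarith) (by linarith) (by linarith) n
    rw [show (t - s + 1 : ℝ) + n = b - s + 1 by rw [hn']; ring] at m1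
    rw [show (t - a : ℝ) + n = b - a by rw [hn']; ring] at m2
    refine mul_nonneg hG.le (sub_nonneg.mpr (m1.trans ?_))
    rw [le_div_iff₀ p3]
    exact mul_le_mul_of_nonneg_left m2 p1.le
end

section
/- Along the diagonal, the left-focal Green's function satisfies G_l(s, s) ≤ b − a − 2 for every s with a+2 ≤ s ≤ b, with equality at s = a+2. -/
lemma rf_step (x y α : ℝ) (hx : 1 ≤ x) (hy : 2 ≤ y) (h1 : 1 < α) (h2 : α < 2) :
    rf x (α - 1) * rf (y + 1) (α - 2) ≤ rf (x + 1) (α - 1) * rf y (α - 2) := by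
  have e1 : Real.Gamma (x + 1 + (α - 1)) = (x + (α - 1)) * Real.Gamma (x + (α - 1)) := by
    rw [← Real.Gamma_add_one (by linarith)]; congr 1; ring
  have e2 : Real.Gamma (y + 1 + (α - 2)) = (y + (α - 2)) * Real.Gamma (y + (α - 2)) := by
    rw [← Real.Gamma_add_one (by linarith)]; congr 1; ring
  have e3 : Real.Gamma (x + 1) = x * Real.Gamma x := Real.Gamma_add_one (by linarith)
  have e4 : Real.Gamma (y + 1) = y * Real.Gamma y := Real.Gamma_add_one (by linarith)
  have p1 : 0 < Real.Gamma (x + (α - 1)) := Real.Gamma_pos_of_pos (by linarith)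
  have p2 : 0 < Real.Gamma (y + (α - 2)) := Real.Gamma_pos_of_pos (by linarith)
  have p3 : 0 < Real.Gamma x := Real.Gamma_pos_of_pos (by linarith)
  have p4 : 0 < Real.Gamma y := Real.Gamma_pos_of_pos (by linarith)
  have hx0 : 0 < x := by linarith
  have hy0 : 0 < y := by linarith
  unfold rf
  rw [if_neg hx0.ne', if_neg hy0.ne', if_neg (by linarith), if_neg (by linarith), e1, e2, e3, e4]
  generalize Real.Gamma (x + (α - 1)) = A at *
  generalize Real.Gamma (y + (α - 2)) = B at *
  generalize Real.Gamma x = C at *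
  generalize Real.Gamma y = D at *
  have l : A / C * ((y + (α - 2)) * B / (y * D)) = A * B / (C * D) * ((y + (α - 2)) / y) := by
    field_simp
  have r : (x + (α - 1)) * A / (x * C) * (B / D) = A * B / (C * D) * ((x + (α - 1)) / x) := by
    field_simp
  rw [l, r]
  apply mul_le_mul_of_nonneg_left _ (by positivity)
  have q1 : (y + (α - 2)) / y ≤ 1 := by rw [div_le_one hy0]; linarith
  have q2 : 1 ≤ (x + (α - 1)) / x := by rw [one_le_div hx0]; linarith
  linarith

lemma rf_pos (x r : ℝ) (hx : 0 < x) (h : 0 < x + r) : 0 < rf x r := by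
  unfold rf
  rw [if_neg hx.ne']
  exact div_pos (Real.Gamma_pos_of_pos h) (Real.Gamma_pos_of_pos hx)

theorem left_focal_green_diagonal (a b : ℤ) (hab : 2 ≤ b - a) (α : ℝ)
    (hα1 : 1 < α) (hα2 : α < 2) :
    (∀ s : ℤ, a + 2 ≤ s → s ≤ b → Gl a b α s s ≤ (b - a - 2 : ℝ)) ∧
    Gl a b α (a + 2) (a + 2) = (b - a - 2 : ℝ) := by
  have hn : (2 : ℝ) ≤ (b : ℝ) - a := by exact_mod_cast hab
  have g0 : 0 < Real.Gamma α := Real.Gamma_pos_of_pos (by linarith)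
  have hpos := rf_pos ((b : ℝ) - a) (α - 2) (by linarith) (by linarith)
  have heq : Gl a b α (a + 2) (a + 2) = (b - a - 2 : ℝ) := by
    unfold Gl
    rw [if_neg (by omega)]
    unfold rf
    push_cast
    rw [if_neg (by linarith), if_neg (by norm_num), if_neg (by linarith), if_neg (by norm_num)]
    have e1 : Real.Gamma ((b : ℝ) - (a + 2) + 1 + (α - 1)) = Real.Gamma (b - a + (α - 2)) := by
      congr 1; ring
    have e2 : Real.Gamma ((a : ℝ) + 2 - a + (α - 2)) = Real.Gamma α := by congr 1; ring
    have e3 : Real.Gamma ((a : ℝ) + 2 - a) = 1 := by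
      rw [show (a : ℝ) + 2 - a = 2 by ring, Real.Gamma_two]
    have e4 : Real.Gamma ((a : ℝ) + 2 - (a + 2) + 1) = 1 := by
      rw [show (a : ℝ) + 2 - (a + 2) + 1 = 1 by ring, Real.Gamma_one]
    have e5 : Real.Gamma ((a : ℝ) + 2 - (a + 2) + 1 + (α - 1)) = Real.Gamma α := by
      congr 1; ring
    have e6 : Real.Gamma ((b : ℝ) - a)
        = (b - (a + 2) + 1) * Real.Gamma ((b : ℝ) - (a + 2) + 1) := by
      rw [← Real.Gamma_add_one (by linarith)]; congr 1; ring
    have p1 : 0 < Real.Gamma ((b : ℝ) - a + (α - 2)) := Real.Gamma_pos_of_pos (by linarith)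
    have p2 : 0 < Real.Gamma ((b : ℝ) - (a + 2) + 1) := Real.Gamma_pos_of_pos (by linarith)
    rw [e1, e2, e3, e4, e5, e6]
    generalize Real.Gamma ((b : ℝ) - a + (α - 2)) = A at *
    generalize Real.Gamma ((b : ℝ) - (a + 2) + 1) = B at *
    generalize Real.Gamma α = C at *
    have hz : (0 : ℝ) < b - (a + 2) + 1 := by linarith
    field_simp
    ring
  refine ⟨?_, heq⟩
  intro s hs
  induction s, hs using Int.le_induction with
  | base => intro _; exact heq.le
  | succ s hs ih =>
    intro hb
    refine le_trans ?_ (ih (by omega))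
    have h1 : (a : ℝ) + 2 ≤ s := by exact_mod_cast hs
    have h2 : (s : ℝ) + 1 ≤ b := by exact_mod_cast hb
    have st := rf_step ((b : ℝ) - s) ((s : ℝ) - a) α (by linarith) (by linarith) hα1 hα2
    unfold Gl
    rw [if_neg (by omega), if_neg (by omega)]
    push_cast
    rw [show (b : ℝ) - (s + 1) + 1 = b - s by ring, show (s : ℝ) + 1 - a = s - a + 1 by ring,
      show (s : ℝ) + 1 - (s + 1) + 1 = s - s + 1 by ring]
    apply mul_le_mul_of_nonneg_left _ (by positivity)
    apply sub_le_sub_right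
    exact div_le_div_of_nonneg_right st hpos.le
end

section
/- For every t with a+1 ≤ t ≤ b, the row sum of the left-focal Green's function has the closed form ∑_{s=a+2}^{b} G_l(t, s) = [ rf(t−a, α−2) / rf(b−a, α−2) ] · rf(b−a−1, α)/Γ(α+1) − rf(t−a−1, α)/Γ(α+1). -/
theorem rf_step_s4 (α : ℝ) (hα : 1 < α) (n : ℕ) :
    rf ((n : ℝ) + 1) (α - 1) + rf (n : ℝ) α / α = rf ((n : ℝ) + 1) α / α := by
  have hn1 : (n : ℝ) + 1 ≠ 0 := by positivity
  have h1 : (n : ℝ) + 1 + (α - 1) = n + α := by ring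
  have h2 : (n : ℝ) + 1 + α = (n + α) + 1 := by ring
  have hpos : (0 : ℝ) < n + α := by positivity
  have hα0 : α ≠ 0 := by positivity
  unfold rf
  rw [if_neg hn1, if_neg hn1, h1, h2, Real.Gamma_add_one hpos.ne']
  by_cases hn : (n : ℝ) = 0
  · rw [if_pos hn, hn]
    simp
    field_simp
  · rw [if_neg hn, Real.Gamma_add_one hn]
    have hg : Real.Gamma (n : ℝ) ≠ 0 :=
      (Real.Gamma_pos_of_pos (lt_of_le_of_ne (Nat.cast_nonneg n) (Ne.symm hn))).ne'
    field_simp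
    ring

theorem rf_sum (α : ℝ) (hα : 1 < α) (t : ℤ) (n : ℕ) :
    ∑ s ∈ Finset.Icc (t - n + 1) t, rf (t - s + 1 : ℝ) (α - 1) = rf (n : ℝ) α / α := by
  induction n with
  | zero => simp [rf]
  | succ n ih =>
    have hI : Finset.Icc (t - ((n + 1 : ℕ) : ℤ) + 1) t
        = insert (t - (n : ℤ)) (Finset.Icc (t - n + 1) t) := by
      ext s
      simp only [Finset.mem_Icc, Finset.mem_insert]
      push_cast
      omega
    rw [hI, Finset.sum_insert (by simp), ih]
    push_cast
    rw [← rf_step_s4 α hα n]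
    congr 2
    ring

theorem rf_sum' (α : ℝ) (hα : 1 < α) (a t : ℤ) (h : a + 1 ≤ t) :
    ∑ s ∈ Finset.Icc (a + 2) t, rf (t - s + 1 : ℝ) (α - 1) = rf (t - a - 1 : ℝ) α / α := by
  obtain ⟨n, hn⟩ := Int.eq_ofNat_of_zero_le (show 0 ≤ t - a - 1 by omega)
  have := rf_sum α hα t n
  have e : t - (n : ℤ) + 1 = a + 2 := by omega
  have e2 : (n : ℝ) = t - a - 1 := by exact_mod_cast hn.symm
  rw [e, e2] at this
  exact this

theorem left_focal_green_row_sum (a b : ℤ) (hab : 2 ≤ b - a) (α : ℝ)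
    (hα1 : 1 < α) (hα2 : α < 2) :
    ∀ t : ℤ, a + 1 ≤ t → t ≤ b →
      ∑ s ∈ Finset.Icc (a + 2) b, Gl a b α t s =
        rf (t - a : ℝ) (α - 2) / rf (b - a : ℝ) (α - 2) *
          rf (b - a - 1 : ℝ) α / Real.Gamma (α + 1) -
        rf (t - a - 1 : ℝ) α / Real.Gamma (α + 1) := by
  intro t h1 h2
  have hG : ∀ s : ℤ, Gl a b α t s =
      (rf (t - a : ℝ) (α - 2) / rf (b - a : ℝ) (α - 2) / Real.Gamma α) *
        rf (b - s + 1 : ℝ) (α - 1) -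
      (1 / Real.Gamma α) * (if s ≤ t then rf (t - s + 1 : ℝ) (α - 1) else 0) := by
    intro s
    unfold Gl
    by_cases h : t ≤ s - 1
    · rw [if_pos h, if_neg (by omega)]
      ring
    · rw [if_neg h, if_pos (by omega)]
      ring
  have hf : (Finset.Icc (a + 2) b).filter (fun s => s ≤ t) = Finset.Icc (a + 2) t := by
    ext s
    simp only [Finset.mem_Icc, Finset.mem_filter]
    omega
  simp_rw [hG]
  rw [Finset.sum_sub_distrib, ← Finset.mul_sum, ← Finset.mul_sum, ← Finset.sum_filter, hf,
    rf_sum' α hα1 a t h1, rf_sum' α hα1 a b (by omega),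
    Real.Gamma_add_one (by positivity : α ≠ 0)]
  simp only [div_eq_mul_inv, mul_inv]
  ring
end

section
/- For every t with a+1 ≤ t ≤ b, the row sum of the left-focal Green's function satisfies ∑_{s=a+2}^{b} G_l(t, s) ≤ (b − a − 1)(b − a + α − 2)/(α(α − 1)), and equality holds at t = a+1. -/
lemma rf_sum_aux (b : ℤ) (α : ℝ) (hα : 1 < α) (N : ℕ) :
    ∑ s ∈ Finset.Icc (b + 1 - N) b, rf (b - s + 1 : ℝ) (α - 1) =
      N * Real.Gamma (N + α) / (α * Real.Gamma (N + 1)) := by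
  induction N with
  | zero => simp
  | succ N ih =>
    have h1 : Finset.Icc (b + 1 - ((N + 1 : ℕ) : ℤ)) b
        = insert (b - (N : ℤ)) (Finset.Icc (b + 1 - (N : ℤ)) b) := by
      ext s
      simp only [Finset.mem_Icc, Finset.mem_insert]
      push_cast
      omega
    rw [h1, Finset.sum_insert (by simp), ih]
    have hN : (0 : ℝ) ≤ N := Nat.cast_nonneg N
    have e1 : Real.Gamma ((N : ℝ) + 1 + α) = (N + α) * Real.Gamma (N + α) := by
      rw [← Real.Gamma_add_one (by positivity)]; congr 1; ring
    have e2 : Real.Gamma ((N : ℝ) + 1 + 1) = (N + 1) * Real.Gamma (N + 1) :=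
      Real.Gamma_add_one (by positivity)
    have hg : Real.Gamma ((N : ℝ) + 1) ≠ 0 := (Real.Gamma_pos_of_pos (by positivity)).ne'
    have e3 : rf (b - ((b - (N : ℤ) : ℤ) : ℝ) + 1 : ℝ) (α - 1)
        = Real.Gamma (N + α) / Real.Gamma (N + 1) := by
      have : (b - ((b - (N : ℤ) : ℤ) : ℝ) + 1 : ℝ) = N + 1 := by push_cast; ring
      rw [this]
      unfold rf
      rw [if_neg (by positivity)]
      congr 2
      ring
    rw [e3]
    push_cast
    rw [e1, e2]
    field_simp
    ring

lemma rf_anti_aux_s5 (α : ℝ) (h1 : 1 < α) (h2 : α < 2) (k : ℕ) :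
    rf (k + 1 : ℝ) (α - 2) ≤ Real.Gamma (α - 1) := by
  induction k with
  | zero =>
    apply le_of_eq
    simp [rf]
    congr 1; ring
  | succ k ih =>
    refine le_trans ?_ ih
    have hk : (0 : ℝ) ≤ k := Nat.cast_nonneg k
    have hp := rf_pos_aux (k + 1) (α - 2) (by positivity) (by linarith)
    have : rf ((k + 1 : ℕ) + 1 : ℝ) (α - 2)
        = (k + 1 + (α - 2)) / (k + 1) * rf (k + 1 : ℝ) (α - 2) := by
      have hg : Real.Gamma ((k : ℝ) + 1) ≠ 0 := (Real.Gamma_pos_of_pos (by positivity)).ne'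
      unfold rf
      push_cast
      rw [if_neg (by positivity), if_neg (by positivity),
        Real.Gamma_add_one (s := (k : ℝ) + 1) (by positivity)]
      have : Real.Gamma ((k : ℝ) + 1 + 1 + (α - 2))
          = (k + 1 + (α - 2)) * Real.Gamma (k + 1 + (α - 2)) := by
        rw [← Real.Gamma_add_one (by linarith)]; congr 1; ring
      rw [this]
      field_simp
    rw [this]
    have hle : ((k : ℝ) + 1 + (α - 2)) / (k + 1) ≤ 1 := by
      rw [div_le_one (by positivity)]; linarith
    exact mul_le_of_le_one_left hp.le hle

lemma first_sum_aux (a b : ℤ) (hab : 2 ≤ b - a) (α : ℝ) (hα1 : 1 < α) (c : ℝ) :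
    ∑ s ∈ Finset.Icc (a + 2) b, (1 / Real.Gamma α) *
      (rf (b - s + 1 : ℝ) (α - 1) * c / rf (b - a : ℝ) (α - 2)) =
    (b - a - 1 : ℝ) * ((b - a : ℝ) + α - 2) / (α * (α - 1)) * (c / Real.Gamma (α - 1)) := by
  obtain ⟨N, hN⟩ : ∃ N : ℕ, b - a = N + 2 := ⟨(b - a - 2).toNat, by omega⟩
  have hs := rf_sum_aux b α hα1 (N + 1)
  have e0 : b + 1 - ((N + 1 : ℕ) : ℤ) = a + 2 := by push_cast; omega
  rw [e0] at hs
  rw [← Finset.mul_sum, ← Finset.sum_div, ← Finset.sum_mul, hs]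
  have hba : (b - a : ℝ) = N + 2 := by exact_mod_cast hN
  have hN0 : (0 : ℝ) ≤ N := Nat.cast_nonneg N
  have ha : α - 1 ≠ 0 := by linarith
  have hNa : (N : ℝ) + α ≠ 0 := by positivity
  rw [hba]
  have g1 : Real.Gamma α = (α - 1) * Real.Gamma (α - 1) := by
    rw [← Real.Gamma_add_one ha]; congr 1; ring
  have g2 : Real.Gamma ((N : ℝ) + 1 + α) = (N + α) * Real.Gamma (N + α) := by
    rw [← Real.Gamma_add_one hNa]; congr 1; ring
  have g3 : rf ((N : ℝ) + 2) (α - 2) = Real.Gamma (N + α) / Real.Gamma (N + 2) := by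
    unfold rf
    rw [if_neg (by positivity)]
    congr 2
    ring
  have p1 := (Real.Gamma_pos_of_pos (show 0 < α - 1 by linarith)).ne'
  have p2 := (Real.Gamma_pos_of_pos (show 0 < (N : ℝ) + α by linarith)).ne'
  have p3 := (Real.Gamma_pos_of_pos (show 0 < (N : ℝ) + 2 by linarith)).ne'
  have g4 : (N : ℝ) + 1 + 1 = N + 2 := by ring
  push_cast
  rw [g1, g2, g3, g4]
  field_simp
  ring

theorem left_focal_green_row_sum_bound (a b : ℤ) (hab : 2 ≤ b - a) (α : ℝ)
    (hα1 : 1 < α) (hα2 : α < 2) :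
    (∀ t : ℤ, a + 1 ≤ t → t ≤ b →
      ∑ s ∈ Finset.Icc (a + 2) b, Gl a b α t s ≤
        (b - a - 1 : ℝ) * ((b - a : ℝ) + α - 2) / (α * (α - 1))) ∧
    ∑ s ∈ Finset.Icc (a + 2) b, Gl a b α (a + 1) s =
      (b - a - 1 : ℝ) * ((b - a : ℝ) + α - 2) / (α * (α - 1)) := by
  have p1 := Real.Gamma_pos_of_pos (show 0 < α - 1 by linarith)
  have hba : (2 : ℝ) ≤ b - a := by exact_mod_cast hab
  constructor
  · intro t ht1 ht2
    have step : ∑ s ∈ Finset.Icc (a + 2) b, Gl a b α t s ≤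
        ∑ s ∈ Finset.Icc (a + 2) b, (1 / Real.Gamma α) *
      (rf (b - s + 1 : ℝ) (α - 1) * rf (t - a : ℝ) (α - 2) / rf (b - a : ℝ) (α - 2)) := by
      apply Finset.sum_le_sum
      intro s hs
      unfold Gl
      split_ifs with h
      · exact le_rfl
      · have hts : (s : ℝ) ≤ t := by exact_mod_cast (show s ≤ t by omega)
        have := rf_pos_aux (t - s + 1) (α - 1) (by linarith) (by linarith)
        have p0 := Real.Gamma_pos_of_pos (show 0 < α by linarith)
        apply mul_le_mul_of_nonneg_left _ (by positivity)
        linarith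
    refine step.trans ?_
    rw [first_sum_aux a b hab α hα1]
    obtain ⟨k, hk⟩ : ∃ k : ℕ, t - a = k + 1 := ⟨(t - a - 1).toNat, by omega⟩
    have hk' : (t - a : ℝ) = k + 1 := by exact_mod_cast hk
    rw [hk']
    apply mul_le_of_le_one_right
    · apply div_nonneg
      · apply mul_nonneg <;> linarith
      · apply mul_nonneg <;> linarith
    · rw [div_le_one p1]
      exact rf_anti_aux_s5 α hα1 hα2 k
  · have hc : rf (((a + 1 : ℤ) : ℝ) - a) (α - 2) = Real.Gamma (α - 1) := by
      have : (((a + 1 : ℤ) : ℝ) - a) = 1 := by push_cast; ring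
      rw [this]
      simp [rf]
      congr 1; ring
    have := first_sum_aux a b hab α hα1 (Real.Gamma (α - 1))
    rw [div_self p1.ne', mul_one] at this
    rw [← this]
    apply Finset.sum_congr rfl
    intro s hs
    rw [Finset.mem_Icc] at hs
    unfold Gl
    rw [if_pos (by omega), hc]
end

section
/- (Eigenvalue bound, left-focal problem) Let λ ∈ ℝ and suppose u : N[a+1,b] → ℝ is not identically zero and satisfies u(t) = λ ∑_{s=a+2}^{b} G_l(t, s) u(s) for every t with a+1 ≤ t ≤ b (the Green's-function form of the eigenvalue problem ∇_a^α u(t) + λ u(t) = 0 for a+2 ≤ t ≤ b, with ∇_a^{α−1} u(a+1) = 0 and u(b) = 0). Then |λ| ≥ (α − 1)/(b − a − 1)². -/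
/-- `rf (k+1) (α-2)` as a sequence. -/
noncomputable def seqC (α : ℝ) (k : ℕ) : ℝ := Real.Gamma (k + (α - 1)) / Real.Gamma (k + 1)

/-- `rf (k+1) (α-1)` as a sequence. -/
noncomputable def seqD (α : ℝ) (k : ℕ) : ℝ := Real.Gamma (k + 1 + (α - 1)) / Real.Gamma (k + 1)

lemma rf_seqC (α : ℝ) (k : ℕ) (x : ℝ) (hx : x = k + 1) : rf x (α - 2) = seqC α k := by
  have : (k : ℝ) + 1 ≠ 0 := by positivity
  subst hx
  rw [rf, if_neg this, seqC]
  congr 2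
  ring

lemma rf_seqD (α : ℝ) (k : ℕ) (x : ℝ) (hx : x = k + 1) : rf x (α - 1) = seqD α k := by
  have : (k : ℝ) + 1 ≠ 0 := by positivity
  subst hx
  rw [rf, if_neg this, seqD]

lemma seqC_pos (α : ℝ) (h1 : 1 < α) (k : ℕ) : 0 < seqC α k := by
  have : (0 : ℝ) ≤ k := by positivity
  exact div_pos (Real.Gamma_pos_of_pos (by linarith)) (Real.Gamma_pos_of_pos (by linarith))

lemma seqD_pos (α : ℝ) (h1 : 1 < α) (k : ℕ) : 0 < seqD α k := by
  have : (0 : ℝ) ≤ k := by positivity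
  exact div_pos (Real.Gamma_pos_of_pos (by linarith)) (Real.Gamma_pos_of_pos (by linarith))

lemma seqC_anti (α : ℝ) (h1 : 1 < α) (h2 : α < 2) : Antitone (seqC α) := by
  apply antitone_nat_of_succ_le
  intro k
  have hk : (0 : ℝ) ≤ k := by positivity
  have e : seqC α (k + 1) = seqC α k * ((k + (α - 1)) / (k + 1)) := by
    unfold seqC
    push_cast
    rw [Real.Gamma_add_one (s := (k : ℝ) + 1) (by positivity),
      show (k : ℝ) + 1 + (α - 1) = (k + (α - 1)) + 1 by ring,
      Real.Gamma_add_one (s := (k : ℝ) + (α - 1)) (by linarith)]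
    rw [mul_comm, mul_comm ((k : ℝ) + 1), mul_div_mul_comm]
  rw [e]
  apply mul_le_of_le_one_right (seqC_pos α h1 k).le
  rw [div_le_one (by positivity)]
  linarith

lemma seqD_mono (α : ℝ) (h1 : 1 < α) : Monotone (seqD α) := by
  apply monotone_nat_of_le_succ
  intro k
  have hk : (0 : ℝ) ≤ k := by positivity
  have e : seqD α (k + 1) = seqD α k * ((k + 1 + (α - 1)) / (k + 1)) := by
    unfold seqD
    push_cast
    rw [Real.Gamma_add_one (s := (k : ℝ) + 1) (by positivity),
      show (k : ℝ) + 1 + 1 + (α - 1) = (k + 1 + (α - 1)) + 1 by ring,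
      Real.Gamma_add_one (s := (k : ℝ) + 1 + (α - 1)) (by linarith)]
    rw [mul_comm, mul_comm ((k : ℝ) + 1), mul_div_mul_comm]
  rw [e]
  apply le_mul_of_one_le_right (seqD_pos α h1 k).le
  rw [one_le_div (by positivity)]
  linarith

lemma seqD_eq (α : ℝ) (k : ℕ) : seqD α k = (k + 1) * seqC α (k + 1) := by
  have h : Real.Gamma ((k : ℝ) + 1) ≠ 0 := (Real.Gamma_pos_of_pos (by positivity)).ne'
  have hk : (k : ℝ) + 1 ≠ 0 := by positivity
  unfold seqC seqD
  push_cast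
  rw [Real.Gamma_add_one (s := (k : ℝ) + 1) hk]
  field_simp

lemma seqC_zero (α : ℝ) (h1 : 1 < α) : 1 / Real.Gamma α * seqC α 0 = 1 / (α - 1) := by
  have h : Real.Gamma (α - 1) ≠ 0 := (Real.Gamma_pos_of_pos (by linarith)).ne'
  have h' : α - 1 ≠ 0 := by linarith
  have e : Real.Gamma α = (α - 1) * Real.Gamma (α - 1) := by
    rw [← Real.Gamma_add_one h']
    congr 1
    ring
  rw [e]
  simp only [seqC, Nat.cast_zero, zero_add, Real.Gamma_one, div_one]
  field_simp

lemma Gl_bound (a b : ℤ) (α : ℝ) (h1 : 1 < α) (h2 : α < 2) (t s : ℤ)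
    (ht : a + 1 ≤ t) (htb : t ≤ b) (hs : a + 2 ≤ s) (hsb : s ≤ b) :
    |Gl a b α t s| ≤ (b - a - 1 : ℝ) / (α - 1) := by
  obtain ⟨i, rfl⟩ : ∃ i : ℕ, t = a + 1 + i := ⟨(t - (a + 1)).toNat, by omega⟩
  obtain ⟨j, rfl⟩ : ∃ j : ℕ, s = a + 2 + j := ⟨(s - (a + 2)).toNat, by omega⟩
  obtain ⟨m, rfl⟩ : ∃ m : ℕ, b = a + 2 + j + m := ⟨(b - (a + 2 + j)).toNat, by omega⟩
  have hg : 0 < 1 / Real.Gamma α := one_div_pos.2 (Real.Gamma_pos_of_pos (by linarith))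
  have hC := seqC_pos α h1
  have hD := seqD_pos α h1
  unfold Gl
  rw [rf_seqD α m _ (by push_cast; ring), rf_seqC α i _ (by push_cast; ring),
    rf_seqC α (j + m + 1) _ (by push_cast; ring)]
  have hP : 0 ≤ seqD α m * seqC α i / seqC α (j + m + 1) :=
    (div_pos (mul_pos (hD _) (hC _)) (hC _)).le
  have hup : 1 / Real.Gamma α * (seqD α m * seqC α i / seqC α (j + m + 1)) ≤
      (((a + 2 + j + m : ℤ) : ℝ) - a - 1) / (α - 1) := by
    have e1 : seqD α m / seqC α (j + m + 1) ≤ ((j + m : ℕ) : ℝ) + 1 := by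
      rw [div_le_iff₀ (hC _), ← seqD_eq]
      exact seqD_mono α h1 (by omega)
    have e2 : 1 / Real.Gamma α * seqC α i ≤ 1 / (α - 1) := by
      rw [← seqC_zero α h1]
      exact mul_le_mul_of_nonneg_left (seqC_anti α h1 h2 (Nat.zero_le i)) hg.le
    calc _ = (seqD α m / seqC α (j + m + 1)) * (1 / Real.Gamma α * seqC α i) := by ring
      _ ≤ (((j + m : ℕ) : ℝ) + 1) * (1 / (α - 1)) :=
        mul_le_mul e1 e2 (mul_pos hg (hC _)).le (by positivity)
      _ = _ := by push_cast; ring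
  split_ifs with h
  · rw [abs_of_nonneg (mul_nonneg hg.le hP)]
    exact hup
  · obtain ⟨k, rfl⟩ : ∃ k : ℕ, i = j + 1 + k := ⟨i - (j + 1), by omega⟩
    rw [rf_seqD α k _ (by push_cast; ring)]
    have hk : seqD α k ≤ seqD α m * seqC α (j + 1 + k) / seqC α (j + m + 1) := by
      rw [le_div_iff₀ (hC _)]
      exact mul_le_mul (seqD_mono α h1 (by omega)) (seqC_anti α h1 h2 (by omega)) (hC _).le (hD _).le
    rw [abs_of_nonneg (mul_nonneg hg.le (sub_nonneg.2 hk))]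
    refine le_trans (mul_le_mul_of_nonneg_left ?_ hg.le) hup
    linarith [hD k]

theorem left_focal_eigenvalue_bound (a b : ℤ) (hab : 2 ≤ b - a) (α : ℝ)
    (hα1 : 1 < α) (hα2 : α < 2) (lam : ℝ) (u : ℤ → ℝ)
    (hu : ∃ t : ℤ, a + 1 ≤ t ∧ t ≤ b ∧ u t ≠ 0)
    (heq : ∀ t : ℤ, a + 1 ≤ t → t ≤ b →
      u t = lam * ∑ s ∈ Finset.Icc (a + 2) b, Gl a b α t s * u s) :
    (α - 1) / ((b - a - 1 : ℝ)) ^ 2 ≤ |lam| := by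
  obtain ⟨t0, h0a, h0b, h0⟩ := hu
  obtain ⟨t, htm, hmax⟩ := Finset.exists_max_image (Finset.Icc (a + 1) b) (fun t => |u t|)
    ⟨t0, Finset.mem_Icc.2 ⟨h0a, h0b⟩⟩
  rw [Finset.mem_Icc] at htm
  have hpos : 0 < |u t| := lt_of_lt_of_le (abs_pos.2 h0) (hmax t0 (Finset.mem_Icc.2 ⟨h0a, h0b⟩))
  have hn : (0 : ℝ) < (b : ℝ) - a - 1 := by
    have : (2 : ℝ) ≤ (b : ℝ) - a := by exact_mod_cast hab
    linarith
  have hsum : |∑ s ∈ Finset.Icc (a + 2) b, Gl a b α t s * u s| ≤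
      ((b : ℝ) - a - 1) * (((b : ℝ) - a - 1) / (α - 1) * |u t|) := by
    have hc : (((Finset.Icc (a + 2) b).card : ℕ) : ℝ) = (b : ℝ) - a - 1 := by
      rw [Int.card_Icc]
      have : (((b + 1 - (a + 2)).toNat : ℤ) : ℝ) = ((b - a - 1 : ℤ) : ℝ) := by
        congr 1
        omega
      push_cast at this
      exact_mod_cast this
    rw [← hc, ← nsmul_eq_mul, hc]
    refine (Finset.abs_sum_le_sum_abs _ _).trans (Finset.sum_le_card_nsmul _ _ _ ?_)
    intro s hs
    rw [Finset.mem_Icc] at hs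
    rw [abs_mul]
    exact mul_le_mul (Gl_bound a b α hα1 hα2 t s htm.1 htm.2 hs.1 hs.2)
      (hmax s (Finset.mem_Icc.2 ⟨by omega, hs.2⟩)) (abs_nonneg _)
      (div_pos hn (by linarith)).le
  have hb : (0 : ℝ) < α - 1 := by linarith
  have key : |u t| * 1 ≤ |u t| * (|lam| * (((b : ℝ) - a - 1) ^ 2 / (α - 1))) := by
    calc |u t| * 1 = |lam| * |∑ s ∈ Finset.Icc (a + 2) b, Gl a b α t s * u s| := by
          rw [mul_one, ← abs_mul, ← heq t htm.1 htm.2]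
      _ ≤ |lam| * (((b : ℝ) - a - 1) * (((b : ℝ) - a - 1) / (α - 1) * |u t|)) :=
          mul_le_mul_of_nonneg_left hsum (abs_nonneg _)
      _ = _ := by ring
  have key2 := le_of_mul_le_mul_left key hpos
  rw [← mul_div_assoc, one_le_div hb] at key2
  rw [div_le_iff₀ (by positivity)]
  exact key2
end

section
/- Let 1 < α < 2, let n ≥ 2 be an integer, and let λ be a real number with |λ| < 1. If |λ| < (α − 1)/(n − 1)², then λ·E_{−λ, α, α−1}(n, 0) + E_{−λ, α, α−2}(n, 0) ≠ 0. -/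
/-- The nabla discrete Mittag-Leffler function `E_{p,α,β}(n,0)`. -/
noncomputable def ML (p α β : ℝ) (n : ℤ) : ℝ :=
  ∑' k : ℕ, p ^ k * rf (n : ℝ) (α * k + β) / Real.Gamma (α * k + β + 1)

/-- `PP m x = (x+1)(x+2)...(x+m)`. -/
noncomputable def PP : ℕ → ℝ → ℝ
  | 0, _ => 1
  | (m+1), x => PP m x * (x + m + 1)

lemma PP_pos (m : ℕ) (x : ℝ) (hx : -1 < x) : 0 < PP m x := by
  induction m with
  | zero => simp [PP]
  | succ m ih =>
    have : (0:ℝ) ≤ m := m.cast_nonneg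
    simp only [PP]
    exact mul_pos ih (by linarith)

lemma PP_mono (m : ℕ) (x y : ℝ) (hx : -1 < x) (hxy : x ≤ y) : PP m x ≤ PP m y := by
  induction m with
  | zero => simp [PP]
  | succ m ih =>
    have : (0:ℝ) ≤ m := m.cast_nonneg
    simp only [PP]
    exact mul_le_mul ih (by linarith) (by linarith) (PP_pos m y (by linarith)).le

lemma PP_neg_one (m : ℕ) : PP (m+1) (-1) = 0 := by
  induction m with
  | zero => simp [PP]
  | succ m ih => rw [PP, ih, zero_mul]

lemma PP_gamma (m : ℕ) (x : ℝ) (hx : -1 < x) :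
    Real.Gamma (x + 1 + m) = PP m x * Real.Gamma (x + 1) := by
  induction m with
  | zero => simp [PP]
  | succ m ih =>
    have h0 : (0:ℝ) ≤ m := m.cast_nonneg
    have : x + 1 + ((m+1 : ℕ) : ℝ) = (x + 1 + m) + 1 := by push_cast; ring
    rw [this, Real.Gamma_add_one (by linarith), ih, PP]; ring

/-- Peeling the first factor. -/
lemma PP_shift (m : ℕ) (x : ℝ) : PP (m+1) x = (x + 1) * PP m (x + 1) := by
  induction m with
  | zero => simp [PP]
  | succ m ih => rw [PP, ih, PP]; push_cast; ring

lemma PP_add_le (m : ℕ) (x a : ℝ) (hx : 0 ≤ x) (ha : 0 ≤ a) (ha2 : a ≤ 2) :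
    PP m (x + a) ≤ ((m+1) * (m+2) / 2 : ℝ) * PP m x := by
  induction m with
  | zero => simp [PP]
  | succ m ih =>
    have h0 : (0:ℝ) ≤ m := m.cast_nonneg
    have hp := PP_pos m x (by linarith)
    simp only [PP]; push_cast
    calc PP m (x+a) * (x + a + m + 1)
        ≤ (((m+1) * (m+2) / 2 : ℝ) * PP m x) * (x + a + m + 1) :=
          mul_le_mul_of_nonneg_right ih (by linarith)
      _ = PP m x * ((m+2) / 2) * ((m+1) * (x + a + m + 1)) := by ring
      _ ≤ PP m x * ((m+2) / 2) * ((m+3) * (x + m + 1)) := by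
          apply mul_le_mul_of_nonneg_left _ (by positivity)
          nlinarith
      _ = _ := by ring

lemma Q_add_le (m : ℕ) (x a s : ℝ) (hx : 0 ≤ x) (hs : 0 ≤ s) (ha : 0 ≤ a) (ha2 : a ≤ 2) :
    PP m (x + a + s) - PP m (x + a) ≤ (m * (m+1) / 2 : ℝ) * (PP m (x + s) - PP m x) := by
  induction m with
  | zero => simp [PP]
  | succ m ih =>
    have h0 : (0:ℝ) ≤ m := m.cast_nonneg
    have hQ := PP_mono m x (x+s) (by linarith) (by linarith)
    have hp := PP_add_le m (x+s) a (by linarith) ha ha2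
    rw [show x + s + a = x + a + s by ring] at hp
    simp only [PP]; push_cast
    have e1 : (m * (m+1) / 2 : ℝ) * (x + a + m + 1) ≤ ((m+1) * (m+2) / 2 : ℝ) * (x + m + 1) := by
      nlinarith [mul_nonneg h0 hx, mul_nonneg h0 (mul_nonneg h0 hx), mul_nonneg h0 h0,
        mul_le_mul_of_nonneg_left ha2 (mul_nonneg h0 (by linarith : (0:ℝ) ≤ m + 1))]
    have e2 := mul_le_mul_of_nonneg_right ih (by linarith : 0 ≤ x + a + m + 1)
    have e3 := mul_le_mul_of_nonneg_right e1 (by linarith : 0 ≤ PP m (x+s) - PP m x)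
    have e4 := mul_le_mul_of_nonneg_left hp hs
    linarith

lemma Q_zero_le (m : ℕ) (s : ℝ) (hs : 0 ≤ s) (hs1 : s ≤ 1) :
    PP (m+1) (s + s) - PP (m+1) s ≤ s * (m+1) * PP m (s+1) := by
  induction m with
  | zero => simp [PP]
  | succ m ih =>
    have h0 : (0:ℝ) ≤ m := m.cast_nonneg
    have hp := PP_mono (m+1) (s+s) (s+1) (by linarith) (by linarith)
    rw [PP, PP.eq_2 s (m+1)]
    have e2 := mul_le_mul_of_nonneg_right ih (by linarith : 0 ≤ s + m + 2)
    have e4 := mul_le_mul_of_nonneg_left hp hs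
    have e5 : PP (m+1) (s+1) = PP m (s+1) * (s + 1 + m + 1) := rfl
    push_cast
    have e6 : s * (m+1) * PP m (s+1) * (s + m + 2) = s * (m+1) * PP (m+1) (s+1) := by
      rw [e5]; ring
    linarith

lemma Q_zero_le' (m : ℕ) (s : ℝ) (hs : 0 < s) (hs1 : s ≤ 1) :
    s * (PP (m+1) (s + s) - PP (m+1) s) ≤ ((m+1:ℝ))^2 * PP (m+1) (s-1) := by
  have h0 : (0:ℝ) ≤ m := m.cast_nonneg
  have h1 := Q_zero_le m s hs.le hs1
  rw [PP_shift m (s-1), show s - 1 + 1 = s by ring]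
  have h2 : PP m s * (s + m + 1) = (s+1) * PP m (s+1) := by
    rw [← PP_shift]; rfl
  have hp := PP_pos m s (by linarith)
  have h3 : s * (m+1) * PP m (s+1) ≤ (m+1)^2 * PP m s := by
    have : (s+1) * (s * (m+1) * PP m (s+1)) ≤ (s+1) * ((m+1)^2 * PP m s) := by
      calc (s+1) * (s * (m+1) * PP m (s+1)) = (m+1) * PP m s * (s * (s + m + 1)) := by
            linear_combination (-(s * (m+1))) * h2
        _ ≤ (m+1) * PP m s * ((s+1) * (m+1)) := by
            apply mul_le_mul_of_nonneg_left _ (by positivity)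
            nlinarith
        _ = _ := by ring
    exact le_of_mul_le_mul_left this (by linarith)
  nlinarith

lemma PP_summable (m : ℕ) (a c p : ℝ) (hp : |p| < 1) :
    ∀ j : ℕ, Summable fun k : ℕ => (k:ℝ)^j * PP m (a * k + c) * p^k := by
  induction m with
  | zero =>
    intro j
    simpa [PP] using summable_pow_mul_geometric_of_norm_lt_one j (r := p) (by simpa using hp)
  | succ m ih =>
    intro j
    have := ((ih (j+1)).mul_left a).add ((ih j).mul_left (c + m + 1))
    refine this.congr ?_
    intro k
    simp only [PP]; ring

lemma term_eq (m : ℕ) (p r : ℝ) (k : ℕ) (hr : -1 < r) :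
    p ^ k * rf (((m+1 : ℕ) : ℤ) : ℝ) r / Real.Gamma (r + 1)
      = (Real.Gamma (m+1))⁻¹ * (PP m r * p^k) := by
  have hm : ((((m+1 : ℕ) : ℤ)) : ℝ) = m + 1 := by push_cast; ring
  have h0 : (0:ℝ) ≤ m := m.cast_nonneg
  have hg := Real.Gamma_pos_of_pos (show 0 < r + 1 by linarith)
  rw [rf, hm, if_neg (by linarith), show (m:ℝ) + 1 + r = r + 1 + m by ring, PP_gamma m r hr]
  field_simp

set_option maxHeartbeats 2000000 in
theorem mittag_leffler_no_real_zeros_left (α : ℝ) (hα1 : 1 < α) (hα2 : α < 2)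
    (n : ℤ) (hn : 2 ≤ n) (lam : ℝ) (hlam : |lam| < 1)
    (h : |lam| < (α - 1) / ((n - 1 : ℝ)) ^ 2) :
    lam * ML (-lam) α (α - 1) n + ML (-lam) α (α - 2) n ≠ 0 := by
  obtain ⟨m, rfl⟩ : ∃ m : ℕ, n = ((m + 1 + 1 : ℕ) : ℤ) := ⟨(n-2).toNat, by omega⟩
  have h0 : (0:ℝ) ≤ m := m.cast_nonneg
  have hm : ((((m+1+1 : ℕ) : ℤ)) : ℝ) - 1 = m + 1 := by push_cast; ring
  rw [hm, lt_div_iff₀ (by positivity)] at h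
  set p := -lam with hpdef
  have hlp : lam = -p := by rw [hpdef]; ring
  have hp1 : |p| < 1 := by rw [hpdef, abs_neg]; exact hlam
  have hp : |p| * (m+1)^2 < α - 1 := by rw [hpdef, abs_neg]; exact h
  clear_value p
  subst hlp
  have hak : ∀ k : ℕ, 0 ≤ α * k := fun k => by positivity
  set C := (Real.Gamma ((m+1:ℕ)+1))⁻¹ with hC
  have hCpos : 0 < C := inv_pos.2 (Real.Gamma_pos_of_pos (by positivity))
  have E1 : ML p α (α - 1) ((m+1+1:ℕ):ℤ)
      = C * ∑' k : ℕ, PP (m+1) (α * k + (α-1)) * p^k := by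
    rw [ML, ← tsum_mul_left]
    exact tsum_congr fun k => term_eq (m+1) p _ k (by linarith [hak k])
  have E2 : ML p α (α - 2) ((m+1+1:ℕ):ℤ)
      = C * ∑' k : ℕ, PP (m+1) (α * k + (α-2)) * p^k := by
    rw [ML, ← tsum_mul_left]
    exact tsum_congr fun k => term_eq (m+1) p _ k (by linarith [hak k])
  have S2 : Summable fun k : ℕ => PP (m+1) (α * k + (α-2)) * p^k := by
    simpa using PP_summable (m+1) α (α-2) p hp1 0
  have S3 : Summable fun k : ℕ => PP (m+1) (α * k + (-1)) * p^k := by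
    simpa using PP_summable (m+1) α (-1) p hp1 0
  have E3 : ∑' k : ℕ, PP (m+1) (α * k + (-1)) * p^k
      = p * ∑' k : ℕ, PP (m+1) (α * k + (α-1)) * p^k := by
    rw [S3.tsum_eq_zero_add, ← tsum_mul_left]
    simp only [Nat.cast_zero, mul_zero, zero_add, PP_neg_one, zero_mul]
    refine tsum_congr fun k => ?_
    push_cast
    rw [show α * ((k:ℝ) + 1) + -1 = α * k + (α - 1) by ring]; ring
  set d : ℕ → ℝ := fun k => PP (m+1) (α * k + (α-2)) - PP (m+1) (α * k + (-1)) with hd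
  have Sf : Summable fun k : ℕ => d k * p^k := by
    refine (S2.sub S3).congr fun k => ?_
    simp only [hd]; ring
  have E4 : -p * ML p α (α - 1) ((m+1+1:ℕ):ℤ) + ML p α (α - 2) ((m+1+1:ℕ):ℤ)
      = C * ∑' k : ℕ, d k * p^k := by
    have : ∑' k : ℕ, d k * p^k = ∑' k : ℕ, PP (m+1) (α * k + (α-2)) * p^k
        - ∑' k : ℕ, PP (m+1) (α * k + (-1)) * p^k := by
      rw [← S2.tsum_sub S3]
      refine tsum_congr fun k => ?_
      simp only [hd]; ring
    rw [this, E3, E1, E2]; ring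
  have d0 : d 0 = PP (m+1) (α - 2) := by simp [hd, PP_neg_one]
  have d0pos : 0 < d 0 := by rw [d0]; exact PP_pos _ _ (by linarith)
  have dnn : ∀ k, 0 ≤ d k := by
    intro k
    rcases k with _ | k
    · exact d0pos.le
    · have := PP_mono (m+1) (α * ((k+1:ℕ):ℝ) + (-1)) (α * ((k+1:ℕ):ℝ) + (α-2))
        (by push_cast; nlinarith [hak k]) (by linarith)
      simp only [hd]; linarith
  have hratio : ∀ k, (α-1) * d (k+1) ≤ (m+1)^2 * d k := by
    intro k
    rcases k with _ | k
    · rw [d0]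
      have := Q_zero_le' m (α-1) (by linarith) (by linarith)
      simp only [hd]; push_cast
      convert this using 3
      · ring_nf
      · ring_nf
      · ring_nf
    · have hx : 0 ≤ α * ((k+1:ℕ):ℝ) + (-1) := by push_cast; nlinarith [hak k]
      have := Q_add_le (m+1) _ α (α-1) hx (by linarith) (by linarith) hα2.le
      have e1 : d (k+1+1) = PP (m+1) (α * ((k+1:ℕ):ℝ) + (-1) + α + (α-1))
          - PP (m+1) (α * ((k+1:ℕ):ℝ) + (-1) + α) := by
        simp only [hd]; push_cast; congr 2 <;> ring
      have e2 : d (k+1) = PP (m+1) (α * ((k+1:ℕ):ℝ) + (-1) + (α-1))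
          - PP (m+1) (α * ((k+1:ℕ):ℝ) + (-1)) := by
        simp only [hd]; congr 2; ring
      rw [← e1, ← e2] at this
      push_cast at this
      have n1 := dnn (k+1)
      have n2 := dnn (k+1+1)
      have n3 : ((m+1) * (m+1+1) / 2 : ℝ) * d (k+1) ≤ (m+1)^2 * d (k+1) :=
        mul_le_mul_of_nonneg_right (by nlinarith) n1
      nlinarith
  have hstep : ∀ k, |p| * d (k+1) ≤ d k ∧ (0 < d k → |p| * d (k+1) < d k) := by
    intro k
    have hs : 0 < α - 1 := by linarith
    have a1 := mul_le_mul_of_nonneg_left (hratio k) (abs_nonneg p)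
    constructor
    · have := mul_le_mul_of_nonneg_right hp.le (dnn k)
      refine le_of_mul_le_mul_left (?_ : (α-1) * _ ≤ (α-1) * _) hs
      linarith
    · intro hk
      have := mul_lt_mul_of_pos_right hp hk
      refine lt_of_mul_lt_mul_left (?_ : (α-1) * _ < (α-1) * _) hs.le
      linarith
  have hge : ∀ k, -(|p| * d (k+1)) ≤ p * d (k+1) := fun k => by
    nlinarith [neg_abs_le p, dnn (k+1)]
  have Se : Summable fun k : ℕ => d (2*k) * p^(2*k) :=
    Sf.comp_injective (i := fun k : ℕ => 2*k) (fun a b hab => by simpa using hab)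
  have So : Summable fun k : ℕ => d (2*k+1) * p^(2*k+1) :=
    Sf.comp_injective (i := fun k : ℕ => 2*k+1) (fun a b hab => by simpa using hab)
  rw [E4]
  refine (mul_pos hCpos ?_).ne'
  rw [← tsum_even_add_odd Se So, ← Se.tsum_add So]
  refine (Se.add So).tsum_pos (fun k => ?_) 0 ?_
  · have e : d (2*k) * p^(2*k) + d (2*k+1) * p^(2*k+1) = (p^k)^2 * (d (2*k) + p * d (2*k+1)) := by
      ring
    rw [e]
    exact mul_nonneg (sq_nonneg _) (by linarith [hge (2*k), (hstep (2*k)).1])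
  · have := (hstep 0).2 d0pos
    have := hge 0
    simp only [mul_zero, zero_add, pow_zero, pow_one, mul_one] at *
    linarith
end

section
/- For all (t, s) with a+1 ≤ t ≤ b and a+2 ≤ s ≤ b, the right-focal Green's function satisfies G_r(t, s) ≥ 0. -/
/-- The right-focal Green's function. -/
noncomputable def Gr (a : ℤ) (α : ℝ) (t s : ℤ) : ℝ :=
  if t ≤ s - 1 then
    (1 / Real.Gamma α) * rf (t - a - 1 : ℝ) (α - 1)
  else
    (1 / Real.Gamma α) * (rf (t - a - 1 : ℝ) (α - 1) - rf (t - s + 1 : ℝ) (α - 1))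

theorem rf_step_s10 (x r : ℝ) (hx : 0 < x) (hr : 0 < r) : rf x r ≤ rf (x + 1) r := by
  have h1 : x + 1 ≠ 0 := by positivity
  unfold rf
  rw [if_neg hx.ne', if_neg h1, show x + 1 + r = (x + r) + 1 by ring,
    Real.Gamma_add_one (by positivity), Real.Gamma_add_one hx.ne']
  have g1 := Real.Gamma_pos_of_pos hx
  have g2 := Real.Gamma_pos_of_pos (add_pos hx hr)
  rw [div_le_div_iff₀ g1 (by positivity)]
  have := mul_pos g1 g2
  nlinarith [mul_pos hr this]

theorem rf_mono_nat (x r : ℝ) (hx : 0 < x) (hr : 0 < r) (n : ℕ) : rf x r ≤ rf (x + n) r := by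
  induction n with
  | zero => simp
  | succ k ih =>
    refine ih.trans ?_
    have := rf_step_s10 (x + k) r (by positivity) hr
    rwa [show x + ((k + 1 : ℕ) : ℝ) = x + k + 1 by push_cast; ring]

theorem rf_nonneg_aux (x r : ℝ) (hx : 0 ≤ x) (hr : 0 < r) : 0 ≤ rf x r := by
  unfold rf
  split_ifs with h
  · exact le_rfl
  · exact div_nonneg (Real.Gamma_nonneg_of_nonneg (by positivity)) (Real.Gamma_nonneg_of_nonneg hx)

theorem right_focal_green_nonneg (a b : ℤ) (hab : 2 ≤ b - a) (α : ℝ)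
    (hα1 : 1 < α) (hα2 : α < 2) :
    ∀ t s : ℤ, a + 1 ≤ t → t ≤ b → a + 2 ≤ s → s ≤ b → 0 ≤ Gr a α t s := by
  intro t s h1 h2 h3 h4
  have hr : 0 < α - 1 := by linarith
  have hg : 0 ≤ 1 / Real.Gamma α :=
    one_div_nonneg.mpr (Real.Gamma_nonneg_of_nonneg (by linarith))
  unfold Gr
  split_ifs with h
  · refine mul_nonneg hg (rf_nonneg_aux _ _ ?_ hr)
    have : ((a + 1 : ℤ) : ℝ) ≤ t := by exact_mod_cast h1
    push_cast at this
    linarith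
  · refine mul_nonneg hg (sub_nonneg.mpr ?_)
    obtain ⟨n, hn⟩ := Int.le.dest h3
    have hs : (s : ℝ) = a + 2 + n := by rw [← hn]; push_cast; ring
    have hst : (s : ℝ) ≤ t := by exact_mod_cast (by omega : s ≤ t)
    have := rf_mono_nat (t - s + 1) (α - 1) (by linarith) hr n
    rwa [show (t - s + 1 + n : ℝ) = t - a - 1 by rw [hs]; ring] at this
end

section
/- For every t with a+1 ≤ t ≤ b, the row sum of the right-focal Green's function satisfies ∑_{s=a+2}^{b} G_r(t, s) ≤ (b − a − 1) · rf(b−a−1, α−1)/Γ(α). -/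
theorem rf_nat_nonneg (r : ℝ) (hr : 0 < r) (n : ℕ) : 0 ≤ rf (n : ℝ) r := by
  unfold rf
  split_ifs with h
  · exact le_rfl
  · exact div_nonneg (Real.Gamma_nonneg_of_nonneg (by positivity))
      (Real.Gamma_nonneg_of_nonneg (by positivity))

theorem rf_nat_mono (r : ℝ) (hr : 0 < r) : Monotone (fun n : ℕ => rf (n : ℝ) r) := by
  apply monotone_nat_of_le_succ
  intro n
  rcases Nat.eq_zero_or_pos n with h | h
  · subst h
    have h0 : rf ((0 : ℕ) : ℝ) r = 0 := by simp [rf]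
    rw [h0]
    exact rf_nat_nonneg r hr _
  · have hn : (0 : ℝ) < n := by exact_mod_cast h
    have h0 := rf_nat_nonneg r hr n
    have e : rf ((n + 1 : ℕ) : ℝ) r = (n + r) / n * rf (n : ℝ) r := by
      unfold rf
      have h1 : ((n + 1 : ℕ) : ℝ) ≠ 0 := by positivity
      rw [if_neg h1, if_neg hn.ne']
      push_cast
      rw [show (n : ℝ) + 1 + r = (n + r) + 1 by ring, Real.Gamma_add_one (by positivity),
        Real.Gamma_add_one hn.ne']
      have := (Real.Gamma_pos_of_pos hn).ne'
      field_simp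
    rw [e]
    apply le_mul_of_one_le_left h0
    rw [le_div_iff₀ hn]
    linarith

theorem right_focal_green_row_sum_bound (a b : ℤ) (hab : 2 ≤ b - a) (α : ℝ)
    (hα1 : 1 < α) (hα2 : α < 2) :
    ∀ t : ℤ, a + 1 ≤ t → t ≤ b →
      ∑ s ∈ Finset.Icc (a + 2) b, Gr a α t s ≤
        (b - a - 1 : ℝ) * rf (b - a - 1 : ℝ) (α - 1) / Real.Gamma α := by
  intro t ht1 ht2
  have hr : 0 < α - 1 := by linarith
  have hG : 0 < Real.Gamma α := Real.Gamma_pos_of_pos (by linarith)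
  have hmono : rf (t - a - 1 : ℝ) (α - 1) ≤ rf (b - a - 1 : ℝ) (α - 1) := by
    have h := rf_nat_mono (α - 1) hr
      (show (t - a - 1).toNat ≤ (b - a - 1).toNat from Int.toNat_le_toNat (by omega))
    have e1 : (((t - a - 1).toNat : ℕ) : ℝ) = t - a - 1 := by
      have : (((t - a - 1).toNat : ℕ) : ℤ) = t - a - 1 := Int.toNat_of_nonneg (by omega)
      exact_mod_cast this
    have e2 : (((b - a - 1).toNat : ℕ) : ℝ) = b - a - 1 := by
      have : (((b - a - 1).toNat : ℕ) : ℤ) = b - a - 1 := Int.toNat_of_nonneg (by omega)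
      exact_mod_cast this
    simpa only [e1, e2] using h
  have hterm : ∀ s ∈ Finset.Icc (a + 2) b,
      Gr a α t s ≤ 1 / Real.Gamma α * rf (b - a - 1 : ℝ) (α - 1) := by
    intro s _
    unfold Gr
    split_ifs with h
    · exact mul_le_mul_of_nonneg_left hmono (by positivity)
    · apply mul_le_mul_of_nonneg_left _ (by positivity)
      have h0 := rf_nat_nonneg (α - 1) hr (t - s + 1).toNat
      have e1 : (((t - s + 1).toNat : ℕ) : ℝ) = t - s + 1 := by
        have : (((t - s + 1).toNat : ℕ) : ℤ) = t - s + 1 := Int.toNat_of_nonneg (by omega)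
        exact_mod_cast this
      rw [e1] at h0
      linarith
  have hs := Finset.sum_le_card_nsmul _ _ _ hterm
  have hc : (((Finset.Icc (a + 2) b).card : ℕ) : ℝ) = b - a - 1 := by
    have : (((Finset.Icc (a + 2) b).card : ℕ) : ℤ) = b - a - 1 := by
      rw [Int.card_Icc]
      omega
    exact_mod_cast this
  rw [nsmul_eq_mul, hc] at hs
  refine hs.trans (le_of_eq ?_)
  ring
end

section
/- Let 1 < α < 2, let n ≥ 2 be an integer, and let λ be a real number with |λ| < 1. If |λ| < Γ(α)/( (n − 1) · rf(n−1, α−1) ), then E_{−λ, α, 0}(n, 0) + λ·E_{−λ, α, α−1}(n, 0) ≠ 0. -/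
/-- `cc i r = (r+1)(r+2)...(r+i)/i!`. -/
noncomputable def cc : ℕ → ℝ → ℝ
  | 0, _ => 1
  | (i+1), r => cc i r * (r + i + 1) / (i + 1)

theorem cc_succ_mul (i : ℕ) (r : ℝ) : ((i:ℝ) + 1) * cc (i+1) r = cc i r * (r + i + 1) := by
  have : (i:ℝ) + 1 ≠ 0 := by positivity
  simp only [cc]
  field_simp

theorem cc_zero_right (i : ℕ) : cc i 0 = 1 := by
  induction i with
  | zero => rfl
  | succ i ih =>
    have : (i:ℝ) + 1 ≠ 0 := by positivity
    simp only [cc, ih]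
    field_simp
    ring

theorem cc_pos (i : ℕ) (r : ℝ) (hr : 0 ≤ r) : 0 < cc i r := by
  induction i with
  | zero => simp [cc]
  | succ i ih => simp only [cc]; positivity

theorem cc_shift (i : ℕ) (r : ℝ) : ((i:ℝ) + 1) * cc (i+1) (r-1) = cc i r * r := by
  induction i with
  | zero => simp [cc]
  | succ i ih =>
    have h1 := cc_succ_mul (i+1) (r-1)
    have h2 := cc_succ_mul i r
    have : (i:ℝ) + 1 ≠ 0 := by positivity
    push_cast at *
    rw [h1]
    apply mul_left_cancel₀ this
    linear_combination (r + i + 1) * ih - r * h2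

theorem cc_pascal (i : ℕ) (r : ℝ) : cc (i+1) r - cc (i+1) (r-1) = cc i r := by
  have h1 := cc_succ_mul i r
  have h2 := cc_shift i r
  have : (i:ℝ) + 1 ≠ 0 := by positivity
  apply mul_left_cancel₀ this
  linear_combination h1 - h2

theorem cc_vandermonde (i : ℕ) (r s : ℝ) :
    cc i (r + s + 1) = ∑ p ∈ Finset.HasAntidiagonal.antidiagonal i, cc p.1 s * cc p.2 r := by
  induction i with
  | zero => simp [cc]
  | succ i ih =>
    have h0 : (i:ℝ) + 1 ≠ 0 := by positivity
    apply mul_left_cancel₀ h0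
    rw [cc_succ_mul, ih, Finset.sum_mul]
    have e1 : ((i:ℝ)+1) * ∑ p ∈ Finset.HasAntidiagonal.antidiagonal (i+1), cc p.1 s * cc p.2 r
        = ∑ p ∈ Finset.HasAntidiagonal.antidiagonal (i+1), (p.1:ℝ) * (cc p.1 s * cc p.2 r)
        + ∑ p ∈ Finset.HasAntidiagonal.antidiagonal (i+1), (p.2:ℝ) * (cc p.1 s * cc p.2 r) := by
      rw [← Finset.sum_add_distrib, Finset.mul_sum]
      apply Finset.sum_congr rfl
      intro p hp
      have : (p.1:ℝ) + p.2 = i + 1 := by exact_mod_cast Finset.HasAntidiagonal.mem_antidiagonal.1 hp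
      rw [← this]; ring
    rw [e1, Finset.Nat.sum_antidiagonal_succ, Finset.Nat.sum_antidiagonal_succ']
    simp only [Nat.cast_zero, zero_mul, zero_add, add_zero]
    rw [← Finset.sum_add_distrib]
    apply Finset.sum_congr rfl
    intro p hp
    have : (p.1:ℝ) + p.2 = i := by exact_mod_cast Finset.HasAntidiagonal.mem_antidiagonal.1 hp
    have h1 := cc_succ_mul p.1 s
    have h2 := cc_succ_mul p.2 r
    push_cast
    rw [← this]
    linear_combination - cc p.2 r * h1 - cc p.1 s * h2

theorem gamma_cc (i : ℕ) (r : ℝ) (hr : 0 ≤ r) :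
    Real.Gamma (i + 1 + r) / Real.Gamma (i + 1) / Real.Gamma (r + 1) = cc i r := by
  induction i with
  | zero =>
    have : Real.Gamma (r + 1) ≠ 0 := (Real.Gamma_pos_of_pos (by positivity)).ne'
    simp [cc, add_comm 1 r, this]
  | succ i ih =>
    have h0 : (i:ℝ) + 1 ≠ 0 := by positivity
    have e1 : Real.Gamma (i + 1 + 1 + r) = (i + 1 + r) * Real.Gamma (i + 1 + r) := by
      rw [← Real.Gamma_add_one (by positivity)]; ring_nf
    push_cast
    rw [e1, Real.Gamma_add_one h0, cc, ← ih]
    have h1 : Real.Gamma (r + 1) ≠ 0 := (Real.Gamma_pos_of_pos (by positivity)).ne'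
    have h2 : Real.Gamma ((i:ℝ) + 1) ≠ 0 := (Real.Gamma_pos_of_pos (by positivity)).ne'
    field_simp
    ring

theorem rf_cc (i : ℕ) (r : ℝ) (hr : 0 ≤ r) :
    rf ((i:ℝ) + 1) r / Real.Gamma (r + 1) = cc i r := by
  have h0 : (i:ℝ) + 1 ≠ 0 := by positivity
  rw [rf, if_neg h0, gamma_cc i r hr]

theorem summable_poly (p : ℝ) (hp : |p| < 1) (P : Polynomial ℝ) :
    Summable (fun k : ℕ => p ^ k * P.eval (k:ℝ)) := by
  induction P using Polynomial.induction_on' with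
  | add P Q h1 h2 =>
    refine (h1.add h2).congr ?_
    intro k; simp [mul_add]
  | monomial m a =>
    have := (summable_pow_mul_geometric_of_norm_lt_one m (r := p) (by simpa using hp)).mul_left a
    refine this.congr ?_
    intro k; simp; ring

theorem cc_poly (i : ℕ) (α β : ℝ) : ∃ P : Polynomial ℝ, ∀ x : ℝ, P.eval x = cc i (α * x + β) := by
  induction i with
  | zero => exact ⟨1, by simp [cc]⟩
  | succ i ih =>
    obtain ⟨P, hP⟩ := ih
    refine ⟨P * (Polynomial.C α * Polynomial.X + Polynomial.C (β + i + 1)) * Polynomial.C (1/((i:ℝ)+1)), ?_⟩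
    intro x
    simp only [Polynomial.eval_mul, Polynomial.eval_add, Polynomial.eval_C, Polynomial.eval_X, hP, cc]
    ring

theorem cc_summable (p : ℝ) (hp : |p| < 1) (i : ℕ) (α β : ℝ) :
    Summable (fun k : ℕ => p ^ k * cc i (α * k + β)) := by
  obtain ⟨P, hP⟩ := cc_poly i α β
  refine (summable_poly p hp P).congr ?_
  intro k; rw [hP]

noncomputable def uu (lam α : ℝ) (i : ℕ) : ℝ := ∑' k : ℕ, (-lam) ^ k * cc i (α * k + 0)

theorem uu_split (lam α : ℝ) (hlam : |lam| < 1) (i : ℕ) :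
    uu lam α i = 1 - lam * ∑' k : ℕ, (-lam) ^ k * cc i (α * k + α) := by
  rw [uu, (cc_summable (-lam) (by rwa [abs_neg]) i α 0).tsum_eq_zero_add, ← tsum_mul_left,
    sub_eq_add_neg, ← tsum_neg]
  congr 1
  · simp [cc_zero_right]
  · apply tsum_congr
    intro k
    push_cast
    rw [pow_succ, show α * ((k:ℝ) + 1) + 0 = α * k + α by ring]
    ring

theorem uu_rec (lam α : ℝ) (hlam : |lam| < 1) (i : ℕ) :
    uu lam α i = 1 - lam * ∑ p ∈ Finset.HasAntidiagonal.antidiagonal i, cc p.1 (α-1) * uu lam α p.2 := by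
  rw [uu_split lam α hlam]
  congr 2
  have : ∀ k : ℕ, (-lam) ^ k * cc i (α * k + α)
      = ∑ p ∈ Finset.HasAntidiagonal.antidiagonal i, cc p.1 (α-1) * ((-lam)^k * cc p.2 (α * k + 0)) := by
    intro k
    rw [show α * (k:ℝ) + α = (α * k + 0) + (α - 1) + 1 by ring, cc_vandermonde, Finset.mul_sum]
    apply Finset.sum_congr rfl
    intro p _
    ring
  rw [tsum_congr this, Summable.tsum_finsetSum]
  · apply Finset.sum_congr rfl
    intro p _
    rw [tsum_mul_left, uu]
  · intro p _
    exact (cc_summable (-lam) (by rwa [abs_neg]) p.2 α 0).mul_left _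

theorem cc_mono (α : ℝ) (hα : 1 ≤ α) : Monotone (fun i => cc i (α - 1)) := by
  apply monotone_nat_of_le_succ
  intro i
  have h0 : (0:ℝ) < (i:ℝ) + 1 := by positivity
  have := cc_pos i (α-1) (by linarith)
  simp only [cc]
  rw [le_div_iff₀ h0]
  apply mul_le_mul_of_nonneg_left _ this.le
  linarith

theorem uu_pos (lam α : ℝ) (h0 : 0 ≤ lam) (hlam : |lam| < 1) (hα : 1 ≤ α) (i : ℕ)
    (h : lam * ((i+1) * cc i (α-1)) < 1) : 0 < uu lam α i ∧ uu lam α i ≤ 1 := by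
  induction i using Nat.strong_induction_on with
  | _ i ih =>
    have hu : ∀ j < i, 0 < uu lam α j ∧ uu lam α j ≤ 1 := by
      intro j hj
      apply ih j hj
      refine lt_of_le_of_lt ?_ h
      have h1 := cc_mono α hα hj.le
      have h2 := cc_pos j (α-1) (by linarith)
      have h3 : (j:ℝ) ≤ i := by exact_mod_cast hj.le
      simp only at h1
      gcongr
    have hr := uu_rec lam α hlam i
    rw [Finset.Nat.sum_antidiagonal_eq_sum_range_succ (fun a b => cc a (α-1) * uu lam α b),
      Finset.sum_range_succ'] at hr
    simp only [cc, Nat.sub_zero, one_mul] at hr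
    set S := ∑ k ∈ Finset.range i, cc k (α-1) * (α - 1 + k + 1) / (k + 1) * uu lam α (i - (k+1)) with hS
    have hS' : S = ∑ k ∈ Finset.range i, cc (k+1) (α-1) * uu lam α (i - (k+1)) := rfl
    have hS0 : 0 ≤ S := by
      rw [hS']
      apply Finset.sum_nonneg
      intro k hk
      have hk := Finset.mem_range.1 hk
      exact mul_nonneg (cc_pos _ _ (by linarith)).le (hu _ (by omega)).1.le
    have hS1 : S ≤ i * cc i (α-1) := by
      rw [hS']
      have : ∀ k ∈ Finset.range i, cc (k+1) (α-1) * uu lam α (i - (k+1)) ≤ cc i (α-1) := by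
        intro k hk
        have hk := Finset.mem_range.1 hk
        have h1 := cc_mono α hα (show k + 1 ≤ i by omega)
        simp only at h1
        have h2 := hu (i - (k+1)) (by omega)
        have h3 := cc_pos (k+1) (α-1) (by linarith)
        nlinarith
      simpa using Finset.sum_le_sum this
    have hc := cc_pos i (α-1) (by linarith)
    have hl1 : lam * S ≤ lam * (i * cc i (α-1)) := by gcongr
    have hl2 : 0 ≤ lam * cc i (α-1) := by positivity
    have hl3 : 0 ≤ lam * S := by positivity
    have key : (1 + lam) * uu lam α i = 1 - lam * S := by linarith
    have hpos : 0 < uu lam α i := by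
      have : 0 < (1 + lam) * uu lam α i := by rw [key]; linarith
      exact (pos_iff_pos_of_mul_pos this).1 (by linarith)
    refine ⟨hpos, ?_⟩
    nlinarith

theorem uu_pos' (lam α : ℝ) (h0 : lam ≤ 0) (hlam : |lam| < 1) (hα : 1 ≤ α) (i : ℕ) :
    0 < uu lam α i := by
  rw [uu_split lam α hlam]
  have : 0 ≤ ∑' k : ℕ, (-lam) ^ k * cc i (α * k + α) := by
    apply tsum_nonneg
    intro k
    exact mul_nonneg (pow_nonneg (by linarith) _) (cc_pos _ _ (by positivity)).le
  nlinarith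

theorem ML_cc (p α β : ℝ) (hα : 0 ≤ α) (hβ : 0 ≤ β) (i : ℕ) :
    ML p α β ((i:ℤ) + 1) = ∑' k : ℕ, p ^ k * cc i (α * k + β) := by
  rw [ML]
  apply tsum_congr
  intro k
  rw [mul_div_assoc]
  push_cast
  rw [rf_cc i _ (by positivity)]

theorem mittag_leffler_no_real_zeros_right (α : ℝ) (hα1 : 1 < α) (hα2 : α < 2)
    (n : ℤ) (hn : 2 ≤ n) (lam : ℝ) (hlam : |lam| < 1)
    (h : |lam| < Real.Gamma α / ((n - 1 : ℝ) * rf (n - 1 : ℝ) (α - 1))) :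
    ML (-lam) α 0 n + lam * ML (-lam) α (α - 1) n ≠ 0 := by
  obtain ⟨i, rfl⟩ : ∃ i : ℕ, n = ((i + 1 : ℕ) : ℤ) + 1 := ⟨(n - 2).toNat, by omega⟩
  have hneg : |(-lam)| < 1 := by rwa [abs_neg]
  have key : ML (-lam) α 0 (((i + 1 : ℕ) : ℤ) + 1)
      + lam * ML (-lam) α (α - 1) (((i + 1 : ℕ) : ℤ) + 1) = uu lam α i := by
    rw [ML_cc _ _ _ (by linarith) le_rfl, ML_cc _ _ _ (by linarith) (by linarith), uu_split lam α hlam]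
    have h1 := uu_split lam α hlam (i+1)
    rw [uu] at h1
    rw [h1]
    have h2 := (cc_summable (-lam) hneg (i+1) α α).tsum_sub (cc_summable (-lam) hneg (i+1) α (α-1))
    have h3 : ∀ k : ℕ, (-lam) ^ k * cc (i+1) (α * k + α) - (-lam) ^ k * cc (i+1) (α * k + (α-1))
        = (-lam) ^ k * cc i (α * k + α) := by
      intro k
      rw [← cc_pascal i, show α * (k:ℝ) + (α-1) = α * k + α - 1 by ring]
      ring
    rw [tsum_congr h3] at h2
    rw [h2]; ring
  rw [key]
  rcases le_total lam 0 with h0 | h0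
  · exact (uu_pos' lam α h0 hlam hα1.le i).ne'
  · refine (uu_pos lam α h0 hlam hα1.le i ?_).1.ne'
    have hG : 0 < Real.Gamma α := Real.Gamma_pos_of_pos (by linarith)
    have hr := rf_cc i (α-1) (by linarith)
    rw [sub_add_cancel, div_eq_iff hG.ne'] at hr
    push_cast at h
    rw [add_sub_cancel_right, hr, abs_of_nonneg h0] at h
    have hc := cc_pos i (α-1) (by linarith)
    rw [lt_div_iff₀ (by positivity)] at h
    have : lam * ((i+1) * cc i (α-1)) * Real.Gamma α < 1 * Real.Gamma α := by linarith
    exact lt_of_mul_lt_mul_right this hG.le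
end
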